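/- Let F be a field of characteristic 2 and K = F(√a₁,…,√aₙ) with a₁,…,aₙ ∈ F*. Then W_q(K/F) = Σ_{i=1}^n ⟨1,aᵢ⟩_b ⊗ W_q(F). -/

import Mathlib

/-!  A concrete coefficient-matrix model of (possibly singular) finite-dimensional
quadratic forms over a field, suitable for characteristic 2. -/

/-- Coefficient representation of a (finite-dimensional) quadratic form over a field `F`:
the form of dimension `dim` given by `q(x) = ∑ i j, c i j * x i * x j`. -/
structure QF (F : Type*) [Field F] : Type _ where
  dim : ℕ
  c : Matrix (Fin dim) (Fin dim) F

namespace QF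

variable {F E : Type*} [Field F] [Field E]

/-- Evaluation of the quadratic form at a vector. -/
def eval (q : QF F) (x : Fin q.dim → F) : F :=
  ∑ i, ∑ j, q.c i j * x i * x j

/-- Scalar extension (base change) of a quadratic form along a ring homomorphism. -/
def map (f : F →+* E) (q : QF F) : QF E :=
  ⟨q.dim, fun i j => f (q.c i j)⟩

/-- Orthogonal sum. -/
def orthSum (q q' : QF F) : QF F :=
  ⟨q.dim + q'.dim,
    Matrix.reindex finSumFinEquiv finSumFinEquiv (Matrix.fromBlocks q.c 0 0 q'.c)⟩

/-- Scaling `a • q`. -/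
def smul (a : F) (q : QF F) : QF F := ⟨q.dim, a • q.c⟩

/-- The nonsingular binary quadratic form `[a,b] : (x,y) ↦ ax² + xy + by²`. -/
def bin (a b : F) : QF F := ⟨2, !![a, 1; 0, b]⟩

/-- The diagonal (totally singular) quadratic form `⟨a₁, …, aₙ⟩`. -/
def diag {n : ℕ} (v : Fin n → F) : QF F := ⟨n, Matrix.diagonal v⟩

/-- The zero-dimensional quadratic form. -/
def nil : QF F := { dim := 0, c := 0 }

/-- The one-dimensional form `⟨1⟩`. -/
def unit : QF F := diag (fun _ : Fin 1 => (1 : F))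

/-- Orthogonal sum of a list of forms. -/
def sumList (l : List (QF F)) : QF F := l.foldr orthSum nil

/-- `pfTensor [a₁,…,aₙ] q` is the tensor product `⟨⟨a₁,…,aₙ⟩⟩_b ⊗ q` of the bilinear
Pfister form `⟨⟨a₁,…,aₙ⟩⟩_b = ⟨1,a₁⟩_b ⊗ ⋯ ⊗ ⟨1,aₙ⟩_b` with the quadratic form `q`,
via `⟨1,a⟩_b ⊗ q ≅ q ⊥ a·q`. -/
def pfTensor (l : List F) (q : QF F) : QF F :=
  l.foldr (fun a r => orthSum r (smul a r)) q

/-- The hyperbolic plane `ℍ ≅ [0,0]`. -/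
def hypPlane : QF F := bin 0 0

/-- The orthogonal sum of `k` hyperbolic planes. -/
def hyp (k : ℕ) : QF F := sumList (List.replicate k hypPlane)

/-- The `l`-dimensional zero form `⟨0,…,0⟩`. -/
def zeros (l : ℕ) : QF F := diag (fun _ : Fin l => (0 : F))

/-- Isometry of quadratic forms. -/
def Isometric (q q' : QF F) : Prop :=
  ∃ e : (Fin q.dim → F) ≃ₗ[F] (Fin q'.dim → F), ∀ x, q'.eval (e x) = q.eval x

/-- Anisotropy: the form has no nontrivial zero. -/
def Anisotropic (q : QF F) : Prop := ∀ x, q.eval x = 0 → x = 0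

/-- A quadratic form is nonsingular if the radical of its polar form
`B_q(x,y) = q(x+y) - q(x) - q(y)` (with matrix `c + cᵀ`) is trivial. -/
def Nonsingular (q : QF F) : Prop := ∀ x, (q.c + q.c.transpose).mulVec x = 0 → x = 0

/-- A quadratic form is totally singular if its polar form vanishes identically. -/
def TotallySingular (q : QF F) : Prop := q.c + q.c.transpose = 0

/-- A quadratic form is hyperbolic if it is isometric to an orthogonal sum of
hyperbolic planes. -/
def Hyperbolic (q : QF F) : Prop := ∃ k, Isometric q (hyp k)

/-- Witt equivalence: `q ~ q'` iff the anisotropic parts agree, equivalently the two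
forms become isometric after adding suitable numbers of hyperbolic planes and zero
forms. -/
def WittEquiv (q q' : QF F) : Prop :=
  ∃ k k' l l', Isometric (orthSum q (orthSum (hyp k) (zeros l)))
    (orthSum q' (orthSum (hyp k') (zeros l')))

/-- `AnisoPartOf φ q` : `φ` is (isometric to) the anisotropic part of `q`, i.e. `φ` is
anisotropic and `q ≅ k × ℍ ⊥ φ ⊥ ⟨0,…,0⟩`. -/
def AnisoPartOf (φ q : QF F) : Prop :=
  Anisotropic φ ∧ ∃ k l, Isometric q (orthSum (hyp k) (orthSum φ (zeros l)))

/-- `Dominates q' q` means `q ≺ q'`, i.e. `q'` dominates `q`: there is an injective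
linear map `t` of the underlying spaces with `q' ∘ t = q`. -/
def Dominates (q' q : QF F) : Prop :=
  ∃ t : (Fin q.dim → F) →ₗ[F] (Fin q'.dim → F), Function.Injective t ∧
    ∀ x, q'.eval (t x) = q.eval x

/-- The affine quadric polynomial `∑ cᵢⱼ XᵢXⱼ` of a quadratic form. -/
noncomputable def toPoly (q : QF F) : MvPolynomial (Fin q.dim) F :=
  ∑ i, ∑ j, MvPolynomial.C (q.c i j) * (MvPolynomial.X i * MvPolynomial.X j)

/-- The affine coordinate ring of the (reduced) quadric `q = 0`. -/
abbrev CoordRing (q : QF F) : Type _ :=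
  MvPolynomial (Fin q.dim) F ⧸ (Ideal.span {q.toPoly}).radical

/-- The function field of the quadric `q = 0` (assuming the quadric is integral). -/
abbrev FunctionField (q : QF F) [IsDomain (CoordRing q)] : Type _ :=
  FractionRing (CoordRing q)

/-- The canonical ring homomorphism from a base field `F` into the function field of a
quadric defined over an extension field `K` of `F`. -/
noncomputable def toFunctionField {K : Type*} [Field K] [Algebra F K] (q : QF K)
    [IsDomain (CoordRing q)] : F →+* FunctionField q :=
  (algebraMap (CoordRing q) (FunctionField q)).comp
    ((algebraMap K (CoordRing q)).comp (algebraMap F K))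

end QF

/-!
Let `I` be the subgroup `∑ᵢ ⟨1, aᵢ⟩ ⊗ W_q(F)` and write `φ(c, d)` for the class of `[c, d]` in
`W_q(F) / I`. The scalars `y` with `φ(yc, d) = φ(c, yd)` form a subring of `F` containing all
squares and, by the choice of `I`, every `aᵢ`; hence it contains `z²` for every `z ∈ K`, which
makes `F` a vector space over `K` via `z ↦ z²`. A form in the kernel can be rewritten modulo `I` as
`⊥ᵢ [cᵢ, dᵢ]` with the `dᵢ` linearly independent over `K`. Then `⟨d₁, …, dₙ⟩` is anisotropic over
`K`, so a Lagrangian of the form over `K` is the graph of a symmetric matrix `Z` with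
`cᵢ = Zᵢᵢ + ∑ⱼ dⱼ Zᵢⱼ²`. Since `Zᵢⱼ²` moves freely across `φ`, the sum `∑ᵢ φ(cᵢ, dᵢ)` collapses to
zero.
-/

section Metabolic

open QuadraticMap Module

variable {F : Type*} [Field F]
variable {V W : Type*} [AddCommGroup V] [Module F V] [AddCommGroup W] [Module F W]

theorem isRefl_polarBilin (Q : QuadraticForm F V) : Q.polarBilin.IsRefl := fun x y h => by
  rwa [polarBilin_apply_apply, polar_comm] at h

theorem nondegenerate_polarBilin_iff {Q : QuadraticForm F V} :
    Q.polarBilin.Nondegenerate ↔ ∀ x, (∀ y, polar Q x y = 0) → x = 0 :=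
  (isRefl_polarBilin Q).nondegenerate_iff_separatingLeft

theorem polar_isometryEquiv {Q : QuadraticForm F V} {Q' : QuadraticForm F W}
    (e : Q.IsometryEquiv Q') (x y : V) : polar Q' (e x) (e y) = polar Q x y := by
  simp only [polar, ← e.map_app]
  rw [show e (x + y) = e x + e y from map_add e.toLinearEquiv x y]

theorem nondegenerate_polarBilin_congr {Q : QuadraticForm F V} {Q' : QuadraticForm F W}
    (e : Q.Equivalent Q') (hQ : Q.polarBilin.Nondegenerate) : Q'.polarBilin.Nondegenerate := by
  obtain ⟨e⟩ := e
  rw [nondegenerate_polarBilin_iff] at *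
  intro x hx
  have hx_symm : e.symm x = 0 := hQ _ fun y => by
    rw [← polar_isometryEquiv e, e.apply_symm_apply]
    exact hx (e y)
  exact e.toLinearEquiv.symm.map_eq_zero_iff.1 hx_symm

theorem nondegenerate_polarBilin_prod {Q : QuadraticForm F V} {Q' : QuadraticForm F W}
    (hQ : Q.polarBilin.Nondegenerate) (hQ' : Q'.polarBilin.Nondegenerate) :
    (Q.prod Q').polarBilin.Nondegenerate := by
  rw [nondegenerate_polarBilin_iff] at *
  rintro ⟨x, x'⟩ h
  have hx : x = 0 := hQ x fun y => by simpa using h (y, 0)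
  have hx' : x' = 0 := hQ' x' fun y => by simpa using h (0, y)
  rw [hx, hx', Prod.mk_zero_zero]

theorem smul_prod_smul (a : F) (Q : QuadraticForm F V) (Q' : QuadraticForm F W) :
    (a • Q).prod (a • Q') = a • Q.prod Q' :=
  QuadraticMap.ext fun _ => (mul_add _ _ _).symm

/-- A quadratic form is metabolic if it has a Lagrangian: a totally singular subspace that
contains its own orthogonal. -/
def IsMetabolic (Q : QuadraticForm F V) : Prop :=
  ∃ L : Submodule F V, (∀ x ∈ L, Q x = 0) ∧ LinearMap.BilinForm.orthogonal Q.polarBilin L ≤ L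

theorem polar_eq_zero_of_mem {Q : QuadraticForm F V} {L : Submodule F V}
    (hL : ∀ x ∈ L, Q x = 0) {x y : V} (hx : x ∈ L) (hy : y ∈ L) : polar Q x y = 0 := by
  rw [polar, hL _ (L.add_mem hx hy), hL x hx, hL y hy, sub_zero, sub_zero]

namespace IsMetabolic

theorem zero : IsMetabolic (0 : QuadraticForm F V) :=
  ⟨⊤, fun _ _ => rfl, le_top⟩

theorem congr {Q : QuadraticForm F V} {Q' : QuadraticForm F W} (e : Q.Equivalent Q')
    (hQ : IsMetabolic Q) : IsMetabolic Q' := by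
  obtain ⟨e⟩ := e
  obtain ⟨L, hL, hL'⟩ := hQ
  refine ⟨L.map (e.toLinearEquiv : V →ₗ[F] W), ?_, fun y hy => ⟨e.symm y, hL' fun x hx => ?_, ?_⟩⟩
  · rintro _ ⟨x, hx, rfl⟩
    exact (e.map_app x).trans (hL x hx)
  · rw [polarBilin_apply_apply, ← polar_isometryEquiv e, e.apply_symm_apply]
    exact hy (e x) ⟨x, hx, rfl⟩
  · exact e.apply_symm_apply y

theorem prod {Q : QuadraticForm F V} {Q' : QuadraticForm F W}
    (hQ : IsMetabolic Q) (hQ' : IsMetabolic Q') : IsMetabolic (Q.prod Q') := by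
  obtain ⟨L, hL, hL'⟩ := hQ
  obtain ⟨M, hM, hM'⟩ := hQ'
  refine ⟨L.prod M, fun x hx => ?_, fun x hx => ⟨hL' fun y hy => ?_, hM' fun y hy => ?_⟩⟩
  · rw [prod_apply, hL _ hx.1, hM _ hx.2, add_zero]
  · simpa using hx (y, 0) ⟨hy, M.zero_mem⟩
  · simpa using hx (0, y) ⟨L.zero_mem, hy⟩

theorem smul {Q : QuadraticForm F V} {a : F} (ha : a ≠ 0) (hQ : IsMetabolic Q) :
    IsMetabolic (a • Q) := by
  obtain ⟨L, hL, hL'⟩ := hQ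
  refine ⟨L, fun x hx => by rw [smul_apply, hL x hx, smul_zero], fun x hx => hL' fun y hy => ?_⟩
  have : a • polar Q y x = 0 := (polar_smul Q a y x).symm.trans (hx y hy)
  exact (smul_eq_zero.1 this).resolve_left ha

theorem of_prod_zero {Q : QuadraticForm F V} (h : IsMetabolic (Q.prod (0 : QuadraticForm F W))) :
    IsMetabolic Q := by
  obtain ⟨L, hL, hL'⟩ := h
  refine ⟨L.map (LinearMap.fst F V W), ?_, fun y hy => ⟨(y, 0), hL' ?_, rfl⟩⟩
  · rintro _ ⟨x, hx, rfl⟩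
    simpa using hL x hx
  · intro x hx
    rw [polarBilin_apply_apply, polar_prod, polar_zero_right, add_zero]
    exact hy x.1 ⟨x, hx, rfl⟩

theorem prod_self [CharP F 2] {Q : QuadraticForm F V} (hQ : Q.polarBilin.Nondegenerate) :
    IsMetabolic (Q.prod Q) := by
  refine ⟨LinearMap.range (LinearMap.id.prod LinearMap.id), ?_, ?_⟩
  · rintro _ ⟨x, rfl⟩
    exact CharTwo.add_self_eq_zero (Q x)
  · rintro ⟨y, z⟩ h
    have hyz : y - z = 0 := nondegenerate_polarBilin_iff.1 hQ _ fun x => by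
      rw [polar_comm, polar_sub_right, CharTwo.sub_eq_add]
      simpa using h (x, x) ⟨x, rfl⟩
    exact ⟨y, by rw [sub_eq_zero.1 hyz]; rfl⟩

-- The Lagrangian is the symplectic reduction `(L ∩ (V × M)) / M` of `L`, for `M` one of `H`.
theorem of_prod [FiniteDimensional F V] [FiniteDimensional F W]
    {Q : QuadraticForm F V} {H : QuadraticForm F W} (hQ : Q.polarBilin.Nondegenerate)
    (hH : H.polarBilin.Nondegenerate) (hQH : IsMetabolic (Q.prod H)) (hH' : IsMetabolic H) :
    IsMetabolic Q := by
  obtain ⟨L, hL, hL'⟩ := hQH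
  obtain ⟨M, hM, hM'⟩ := hH'
  refine ⟨(L ⊓ (⊤ : Submodule F V).prod M).map (LinearMap.fst F V W), ?_, fun y hy => ?_⟩
  · rintro _ ⟨⟨x, m⟩, ⟨hx, -, hm⟩, rfl⟩
    simpa [hM m hm] using hL _ hx
  have hy_sup : (y, (0 : W)) ∈ L ⊔ (⊥ : Submodule F V).prod M := by
    rw [← LinearMap.BilinForm.orthogonal_orthogonal (nondegenerate_polarBilin_prod hQ hH)
      (isRefl_polarBilin _) (L ⊔ (⊥ : Submodule F V).prod M)]
    rintro ⟨u, w⟩ huw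
    have hL_mem : (u, w) ∈ L := hL' fun x hx => huw x (Submodule.mem_sup_left hx)
    have hM_mem : w ∈ M := hM' fun x hx => by
      simpa using huw (0, x) (Submodule.mem_sup_right ⟨rfl, hx⟩)
    simpa using hy u ⟨(u, w), ⟨hL_mem, trivial, hM_mem⟩, rfl⟩
  obtain ⟨⟨l, l'⟩, hl, ⟨z, m⟩, ⟨hz, hm⟩, hsum⟩ := Submodule.mem_sup.1 hy_sup
  obtain rfl : z = 0 := hz
  obtain ⟨rfl, hlm⟩ : l = y ∧ l' + m = 0 := by simpa using hsum
  refine ⟨(l, l'), ⟨hl, trivial, ?_⟩, rfl⟩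
  rw [eq_neg_of_add_eq_zero_left hlm]
  exact M.neg_mem hm

theorem prod_symm {Q : QuadraticForm F V} {Q' : QuadraticForm F W} (h : IsMetabolic (Q.prod Q')) :
    IsMetabolic (Q'.prod Q) :=
  h.congr ⟨IsometryEquiv.prodComm Q Q'⟩

theorem prod_trans [CharP F 2] [FiniteDimensional F V] [FiniteDimensional F W]
    {U : Type*} [AddCommGroup U] [Module F U] [FiniteDimensional F U] {Q : QuadraticForm F U}
    {Q' : QuadraticForm F V} {Q'' : QuadraticForm F W} (hQ : Q.polarBilin.Nondegenerate)
    (hQ' : Q'.polarBilin.Nondegenerate) (hQ'' : Q''.polarBilin.Nondegenerate)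
    (h : IsMetabolic (Q.prod Q')) (h' : IsMetabolic (Q'.prod Q'')) : IsMetabolic (Q.prod Q'') :=
  of_prod (nondegenerate_polarBilin_prod hQ hQ'') (nondegenerate_polarBilin_prod hQ' hQ')
    ((h.prod h'.prod_symm).congr ⟨IsometryEquiv.prodProdProdComm Q Q' Q'' Q'⟩) (prod_self hQ')

end IsMetabolic

end Metabolic

section SymplecticBasis

open QuadraticMap Module

variable {F : Type*} [Field F] {V : Type*} [AddCommGroup V] [Module F V] {ι : Type*}

theorem polar_sum_smul_right [Fintype ι] (Q : QuadraticForm F V) (v : V) (w : ι → V) (y : ι → F) :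
    polar Q v (∑ i, y i • w i) = ∑ i, y i * polar Q v (w i) := by
  simp only [← polarBilin_apply_apply, map_sum, map_smul, smul_eq_mul]

theorem polar_sum_smul_left [Fintype ι] (Q : QuadraticForm F V) (v : ι → V) (x : ι → F) (w : V) :
    polar Q (∑ i, x i • v i) w = ∑ i, x i * polar Q (v i) w := by
  simp only [polar_comm Q _ w, polar_sum_smul_right]

theorem map_sum_smul_of_polar_eq_zero [Fintype ι] {Q : QuadraticForm F V} {v : ι → V}
    (hv : ∀ i j, polar Q (v i) (v j) = 0) (x : ι → F) :
    Q (∑ i, x i • v i) = ∑ i, Q (v i) * x i ^ 2 := by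
  classical
  rw [QuadraticMap.map_sum, Finset.sum_eq_zero (s := Finset.filter _ _), add_zero]
  · exact Finset.sum_congr rfl fun i _ => by rw [QuadraticMap.map_smul, smul_eq_mul]; ring
  · intro ij _
    induction ij with | _ i j
    simp [polarSym2_sym2Mk, polar_smul_left, polar_smul_right, hv]

theorem exists_dual_family [DecidableEq ι] [FiniteDimensional F V] {Q : QuadraticForm F V}
    (hQ : Q.polarBilin.Nondegenerate) {l : ι → V} (hl : LinearIndependent F l) :
    ∃ w : ι → V, ∀ i j, polar Q (l i) (w j) = if i = j then 1 else 0 := by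
  let b := Basis.span hl
  choose g hg using fun j => LinearMap.exists_extend (b.coord j)
  refine ⟨fun j => (LinearMap.BilinForm.toDual Q.polarBilin hQ).symm (g j), fun i j => ?_⟩
  rw [polar_comm, ← polarBilin_apply_apply, LinearMap.BilinForm.apply_toDual_symm_apply]
  have := LinearMap.congr_fun (hg j) (b i)
  simpa [b, Basis.span_apply, Finsupp.single_apply] using this

-- Subtracting `∑ i, B (w i) (w j) • l i`, for a bilinear form `B` with `B x x = Q x`, makes the
-- `w j` orthogonal to each other.
theorem exists_orthogonal_dual_family [Finite ι] [DecidableEq ι] [FiniteDimensional F V]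
    {Q : QuadraticForm F V} (hQ : Q.polarBilin.Nondegenerate) {l : ι → V}
    (hl_indep : LinearIndependent F l) (hl : ∀ i j, polar Q (l i) (l j) = 0) :
    ∃ w : ι → V, (∀ i j, polar Q (l i) (w j) = if i = j then 1 else 0) ∧
      (∀ i j, polar Q (w i) (w j) = 0) ∧ ((∀ i, Q (l i) = 0) → ∀ i, Q (w i) = 0) := by
  have := Fintype.ofFinite ι
  obtain ⟨w, hlw⟩ := exists_dual_family hQ hl_indep
  obtain ⟨B, rfl⟩ := LinearMap.BilinMap.toQuadraticMap_surjective Q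
  have polar_w i j : polar B.toQuadraticMap (w i) (w j) = B (w i) (w j) + B (w j) (w i) :=
    LinearMap.BilinMap.polar_toQuadraticMap _ _
  refine ⟨fun j => w j - ∑ i, B (w i) (w j) • l i, fun i j => ?_, fun i j => ?_, fun h j => ?_⟩
  · simp [polar_sub_right, polar_sum_smul_right, hl, hlw]
  · simp [polar_sub_right, polar_sub_left, polar_sum_smul_right, polar_sum_smul_left, hl, hlw,
      polar_comm _ (w _) (l _), polar_w]
  · simp only [sub_eq_add_neg, ← Finset.sum_neg_distrib, ← neg_smul]
    rw [QuadraticMap.map_add B.toQuadraticMap, map_sum_smul_of_polar_eq_zero hl,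
      polar_sum_smul_right]
    simp [h, hlw, polar_comm _ (w _) (l _)]

end SymplecticBasis

section BlockForm

open QuadraticMap Module

variable {F : Type*} [Field F] {V : Type*} [AddCommGroup V] [Module F V]
variable {ι : Type*} [Fintype ι]

/-- The orthogonal sum `[c₁, d₁] ⊥ … ⊥ [cₙ, dₙ]` of binary forms `[c, d] : (x, y) ↦ cx² + xy + dy²`,
realised on `(ι → F) × (ι → F)` so that the two coordinate subspaces are the obvious candidates
for Lagrangians. -/
def blockForm (c d : ι → F) : QuadraticForm F ((ι → F) × (ι → F)) :=
  (weightedSumSquares F c).comp (LinearMap.fst F _ _) +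
    (weightedSumSquares F d).comp (LinearMap.snd F _ _) +
    ∑ i, linMulLin (LinearMap.proj i ∘ₗ LinearMap.fst F _ _)
      (LinearMap.proj i ∘ₗ LinearMap.snd F _ _)

theorem blockForm_apply (c d : ι → F) (p : (ι → F) × (ι → F)) :
    blockForm c d p =
      ∑ i, (c i * p.1 i ^ 2 + d i * p.2 i ^ 2 + p.1 i * p.2 i) := by
  simp [blockForm, weightedSumSquares_apply, Finset.sum_add_distrib, pow_two]

theorem polar_blockForm [CharP F 2] (c d : ι → F) (p q : (ι → F) × (ι → F)) :
    polar (blockForm c d) p q = ∑ i, (p.1 i * q.2 i + p.2 i * q.1 i) := by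
  simp only [polar, blockForm_apply, ← Finset.sum_sub_distrib, Prod.fst_add, Prod.snd_add,
    Pi.add_apply, CharTwo.add_sq]
  exact Finset.sum_congr rfl fun i _ => by ring

theorem nondegenerate_polarBilin_blockForm [CharP F 2] (c d : ι → F) :
    (blockForm c d).polarBilin.Nondegenerate := by
  classical
  rw [nondegenerate_polarBilin_iff]
  refine fun p hp => Prod.ext (funext fun i => ?_) (funext fun i => ?_)
  · simpa [polar_blockForm, Pi.single_apply] using hp (0, Pi.single i 1)
  · simpa [polar_blockForm, Pi.single_apply] using hp (Pi.single i 1, 0)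

theorem equivalent_blockForm [DecidableEq ι] [FiniteDimensional F V] {Q : QuadraticForm F V}
    {l w : ι → V} (hl : ∀ i j, polar Q (l i) (l j) = 0) (hw : ∀ i j, polar Q (w i) (w j) = 0)
    (hlw : ∀ i j, polar Q (l i) (w j) = if i = j then 1 else 0)
    (hV : finrank F V = 2 * Fintype.card ι) :
    Q.Equivalent (blockForm (fun i => Q (l i)) fun i => Q (w i)) := by
  let f : (ι → F) × (ι → F) →ₗ[F] V :=
    (Fintype.linearCombination F l).coprod (Fintype.linearCombination F w)
  have f_apply p : f p = ∑ i, p.1 i • l i + ∑ i, p.2 i • w i := rfl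
  have polar_w p j : polar Q (f p) (w j) = p.1 j := by
    simp [f_apply, polar_add_left, polar_sum_smul_left, hlw, hw]
  have polar_l p j : polar Q (f p) (l j) = p.2 j := by
    simp [f_apply, polar_add_left, polar_sum_smul_left, polar_comm Q (w _), hlw, hl]
  have f_injective : Function.Injective f := (injective_iff_map_eq_zero f).2 fun p hp =>
    Prod.ext (funext fun j => by simp [← polar_w p j, hp])
      (funext fun j => by simp [← polar_l p j, hp])
  have hdim : finrank F ((ι → F) × (ι → F)) = finrank F V := by
    rw [finrank_prod, finrank_pi, hV, two_mul]
  refine Equivalent.symm ⟨⟨LinearEquiv.ofInjectiveOfFinrankEq f f_injective hdim, fun p => ?_⟩⟩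
  calc Q (f p)
    _ = ∑ i, Q (l i) * p.1 i ^ 2 + ∑ i, Q (w i) * p.2 i ^ 2 + ∑ i, p.1 i * p.2 i := by
      rw [f_apply, QuadraticMap.map_add Q, map_sum_smul_of_polar_eq_zero hl,
        map_sum_smul_of_polar_eq_zero hw, polar_sum_smul_left]
      simp [polar_sum_smul_right, hlw]
    _ = blockForm (fun i => Q (l i)) (fun i => Q (w i)) p := by
      rw [blockForm_apply, Finset.sum_add_distrib, Finset.sum_add_distrib]

theorem finrank_eq_two_mul_of_orthogonal_le [FiniteDimensional F V]
    {Q : QuadraticForm F V} (hQ : Q.polarBilin.Nondegenerate) {L : Submodule F V}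
    (hL : ∀ x ∈ L, ∀ y ∈ L, polar Q x y = 0)
    (hL' : LinearMap.BilinForm.orthogonal Q.polarBilin L ≤ L) :
    finrank F V = 2 * finrank F L := by
  have hL_eq : LinearMap.BilinForm.orthogonal Q.polarBilin L = L :=
    hL'.antisymm fun y hy x hx => hL x hx y hy
  have := LinearMap.BilinForm.finrank_orthogonal hQ L
  have := L.finrank_le
  rw [hL_eq] at *
  lia

theorem exists_equivalent_blockForm_of_orthogonal_le [FiniteDimensional F V]
    {Q : QuadraticForm F V} (hQ : Q.polarBilin.Nondegenerate) {L : Submodule F V}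
    (hL : ∀ x ∈ L, ∀ y ∈ L, polar Q x y = 0)
    (hL' : LinearMap.BilinForm.orthogonal Q.polarBilin L ≤ L) :
    ∃ (n : ℕ) (c d : Fin n → F), Q.Equivalent (blockForm c d) ∧
      ((∀ x ∈ L, Q x = 0) → c = 0 ∧ d = 0) := by
  let b := finBasis F L
  have hb i j : polar Q (b i) (b j) = 0 := hL _ (b i).2 _ (b j).2
  have hb_indep : LinearIndependent F fun i => (b i : V) :=
    b.linearIndependent.map' L.subtype L.ker_subtype
  obtain ⟨w, hbw, hw, hw_zero⟩ := exists_orthogonal_dual_family hQ hb_indep hb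
  have hdim : finrank F V = 2 * Fintype.card (Fin (finrank F L)) := by
    rw [Fintype.card_fin, finrank_eq_two_mul_of_orthogonal_le hQ hL hL']
  refine ⟨_, _, _, equivalent_blockForm hb hw hbw hdim, fun h => ?_⟩
  have hb_zero i : Q (b i) = 0 := h _ (b i).2
  exact ⟨funext hb_zero, funext (hw_zero hb_zero)⟩

theorem IsMetabolic.exists_equivalent_blockForm_zero [FiniteDimensional F V]
    {Q : QuadraticForm F V} (hQ : Q.polarBilin.Nondegenerate) (h : IsMetabolic Q) :
    ∃ n, Q.Equivalent (blockForm (0 : Fin n → F) 0) := by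
  obtain ⟨L, hL, hL'⟩ := h
  obtain ⟨n, c, d, e, hcd⟩ := exists_equivalent_blockForm_of_orthogonal_le hQ
    (fun x hx y hy => polar_eq_zero_of_mem hL hx hy) hL'
  obtain ⟨rfl, rfl⟩ := hcd hL
  exact ⟨n, e⟩

theorem exists_polar_isotropic_orthogonal_le [CharP F 2] [FiniteDimensional F V]
    (Q : QuadraticForm F V) :
    ∃ L : Submodule F V, (∀ x ∈ L, ∀ y ∈ L, polar Q x y = 0) ∧
      LinearMap.BilinForm.orthogonal Q.polarBilin L ≤ L := by
  let isotropic : Set (Submodule F V) := {L | ∀ x ∈ L, ∀ y ∈ L, polar Q x y = 0}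
  obtain ⟨L, hL, hL_max⟩ := set_has_maximal_iff_noetherian.2 (inferInstanceAs (IsNoetherian F V))
    isotropic ⟨⊥, by simp [isotropic]⟩
  refine ⟨L, hL, fun y hy => ?_⟩
  by_contra hyL
  refine hL_max (L ⊔ F ∙ y) ?_ (left_lt_sup.2 ?_)
  · have hLy x (hx : x ∈ L) : polar Q x y = 0 := hy x hx
    have hyy : polar Q y y = 0 := by rw [polar_self, two_nsmul, CharTwo.add_self_eq_zero]
    intro u hu v hv
    obtain ⟨x, hx, _, hay, rfl⟩ := Submodule.mem_sup.1 hu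
    obtain ⟨x', hx', _, hay', rfl⟩ := Submodule.mem_sup.1 hv
    obtain ⟨a, rfl⟩ := Submodule.mem_span_singleton.1 hay
    obtain ⟨a', rfl⟩ := Submodule.mem_span_singleton.1 hay'
    simp [polar_add_left, polar_add_right, polar_smul_left, polar_smul_right, hL x hx x' hx',
      hLy x hx, polar_comm Q y x', hLy x' hx', hyy]
  · simpa using hyL

theorem exists_equivalent_blockForm [CharP F 2] [FiniteDimensional F V]
    {Q : QuadraticForm F V} (hQ : Q.polarBilin.Nondegenerate) :
    ∃ (n : ℕ) (c d : Fin n → F), Q.Equivalent (blockForm c d) := by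
  obtain ⟨L, hL, hL'⟩ := exists_polar_isotropic_orthogonal_le Q
  obtain ⟨n, c, d, e, -⟩ := exists_equivalent_blockForm_of_orthogonal_le hQ hL hL'
  exact ⟨n, c, d, e⟩

end BlockForm

section Graph

theorem sum_sum_eq_sum_diag {A ι : Type*} [AddCommMonoid A] (hA : ∀ x : A, x + x = 0)
    {f : ι → ι → A} (hf : ∀ i j, f i j = f j i) (s : Finset ι) :
    ∑ i ∈ s, ∑ j ∈ s, f i j = ∑ i ∈ s, f i i := by
  classical
  induction s using Finset.induction_on with
  | empty => simp only [Finset.sum_empty]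
  | insert a s ha ih =>
    simp only [Finset.sum_insert ha, Finset.sum_add_distrib, ih, hf _ a]
    rw [add_assoc, ← add_assoc (∑ j ∈ s, f a j), hA, zero_add]

open QuadraticMap Module Matrix

variable {F : Type*} [Field F] [CharP F 2] {ι : Type*} [Fintype ι]

theorem blockForm_mulVec {Z : Matrix ι ι F} (hZ : Z.IsSymm) (c d x : ι → F) :
    blockForm c d (x, Z *ᵥ x) = ∑ i, (c i + Z i i + ∑ j, d j * Z i j ^ 2) * x i ^ 2 := by
  have hZx i : (Z *ᵥ x) i ^ 2 = ∑ j, Z j i ^ 2 * x j ^ 2 := by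
    simp only [mulVec, dotProduct, CharTwo.sum_sq, mul_pow, hZ.apply]
  have hxZx : ∑ i, x i * (Z *ᵥ x) i = ∑ i, Z i i * x i ^ 2 := by
    simp only [mulVec, dotProduct, Finset.mul_sum]
    rw [sum_sum_eq_sum_diag CharTwo.add_self_eq_zero]
    · exact Finset.sum_congr rfl fun i _ => by ring
    · exact fun i j => by rw [hZ.apply i j]; ring
  simp only [blockForm_apply, Finset.sum_add_distrib, add_mul, Finset.sum_mul, hZx, hxZx,
    Finset.mul_sum]
  rw [Finset.sum_comm (f := fun i j => d i * _), add_right_comm]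
  simp only [mul_assoc]

theorem isMetabolic_blockForm_of_isSymm {Z : Matrix ι ι F} (hZ : Z.IsSymm) {c d : ι → F}
    (hc : ∀ i, c i = Z i i + ∑ j, d j * Z i j ^ 2) : IsMetabolic (blockForm c d) := by
  classical
  refine ⟨Z.mulVecLin.graph, ?_, ?_⟩
  · rintro ⟨x, y⟩ hxy
    obtain rfl : y = Z *ᵥ x := hxy
    refine (blockForm_mulVec hZ c d x).trans (Finset.sum_eq_zero fun i _ => ?_)
    rw [hc i, add_assoc, CharTwo.add_self_eq_zero, zero_mul]
  · rintro ⟨x, y⟩ h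
    refine funext fun i => CharTwo.add_eq_zero.1 ?_
    have := h (Pi.single i 1, Z *ᵥ Pi.single i 1) rfl
    simpa [polar_blockForm, Pi.single_apply, Finset.sum_add_distrib, mulVec, dotProduct, hZ.apply,
      add_comm] using this

theorem isMetabolic_blockForm_zero (n : ℕ) : IsMetabolic (blockForm (0 : Fin n → F) 0) :=
  isMetabolic_blockForm_of_isSymm isSymm_zero fun _ => by simp

theorem IsMetabolic.exists_isSymm {c d : ι → F} (h : IsMetabolic (blockForm c d))
    (hd : (weightedSumSquares F d).Anisotropic) :
    ∃ Z : Matrix ι ι F, Z.IsSymm ∧ ∀ i, c i = Z i i + ∑ j, d j * Z i j ^ 2 := by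
  classical
  obtain ⟨L, hL, hL'⟩ := h
  obtain ⟨Z, hZL⟩ : ∃ Z : Matrix ι ι F, ∀ x, (x, Z *ᵥ x) ∈ L := by
    let fst : L →ₗ[F] (ι → F) := LinearMap.fst F _ _ ∘ₗ L.subtype
    have fst_injective : Function.Injective fst := by
      refine (injective_iff_map_eq_zero fst).2 ?_
      rintro ⟨⟨x, y⟩, hxy⟩ rfl
      have hy : weightedSumSquares F d y = 0 := by
        simpa [blockForm_apply, weightedSumSquares_apply, pow_two] using hL _ hxy
      simp [hd.eq_zero_iff.1 hy]
    have hdim := finrank_eq_two_mul_of_orthogonal_le (nondegenerate_polarBilin_blockForm c d)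
      (fun x hx y hy => polar_eq_zero_of_mem hL hx hy) hL'
    have fst_surjective : Function.Surjective fst :=
      (LinearMap.injective_iff_surjective_of_finrank_eq_finrank (by
        rw [finrank_prod] at hdim; lia)).1 fst_injective
    obtain ⟨f, rfl⟩ := Submodule.exists_eq_graph (G := L) ⟨fst_injective, fst_surjective⟩
    exact ⟨LinearMap.toMatrix' f, fun x => LinearMap.toMatrix'_mulVec f x⟩
  have hZ : Z.IsSymm := by
    refine IsSymm.ext fun i j => CharTwo.add_eq_zero.1 ?_
    have := polar_eq_zero_of_mem hL (hZL (Pi.single i 1)) (hZL (Pi.single j 1))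
    simpa [polar_blockForm, Pi.single_apply, Finset.sum_add_distrib, add_comm] using this
  refine ⟨Z, hZ, fun i => CharTwo.add_eq_zero.1 ?_⟩
  have := (blockForm_mulVec hZ c d _).symm.trans (hL _ (hZL (Pi.single i 1)))
  simpa [Pi.single_apply, add_assoc] using this

end Graph

namespace QF

open QuadraticMap Module Matrix

section Basic

variable {F : Type*} [Field F]

/-- The quadratic form of a coefficient matrix, as a bundled `QuadraticForm`. -/
def toQuadraticForm (q : QF F) : QuadraticForm F (Fin q.dim → F) := q.c.toQuadraticForm'

theorem toQuadraticForm_apply (q : QF F) (x : Fin q.dim → F) : q.toQuadraticForm x = q.eval x := by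
  simp only [toQuadraticForm, toQuadraticForm', LinearMap.BilinMap.toQuadraticMap_apply,
    toLinearMap₂'_apply, eval, smul_eq_mul]
  exact Finset.sum_congr rfl fun i _ => Finset.sum_congr rfl fun j _ => by ring

theorem polar_toQuadraticForm (q : QF F) (x y : Fin q.dim → F) :
    polar q.toQuadraticForm x y = y ⬝ᵥ (q.c + q.cᵀ) *ᵥ x := by
  rw [toQuadraticForm, toQuadraticForm', LinearMap.BilinMap.polar_toQuadraticMap,
    toLinearMap₂'_apply', toLinearMap₂'_apply', add_mulVec, dotProduct_add, mulVec_transpose,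
    dotProduct_mulVec x, dotProduct_comm y (x ᵥ* q.c), add_comm]

theorem nonsingular_iff {q : QF F} :
    q.Nonsingular ↔ q.toQuadraticForm.polarBilin.Nondegenerate := by
  simp only [Nonsingular, nondegenerate_polarBilin_iff, polar_toQuadraticForm]
  refine forall_congr' fun x => imp_congr_left ⟨fun h y => by rw [h, dotProduct_zero], fun h => ?_⟩
  exact dotProduct_eq_zero _ fun y => by rw [dotProduct_comm, h]

theorem isometric_iff {q q' : QF F} :
    q.Isometric q' ↔ q.toQuadraticForm.Equivalent q'.toQuadraticForm := by
  constructor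
  · rintro ⟨e, he⟩
    refine ⟨⟨e, fun x => ?_⟩⟩
    change q'.toQuadraticForm (e x) = _
    rw [toQuadraticForm_apply, toQuadraticForm_apply, he]
  · rintro ⟨e⟩
    refine ⟨e.toLinearEquiv, fun x => ?_⟩
    rw [← toQuadraticForm_apply, ← toQuadraticForm_apply]
    exact e.map_app x

theorem orthSum_equivalent (q q' : QF F) :
    (q.orthSum q').toQuadraticForm.Equivalent (q.toQuadraticForm.prod q'.toQuadraticForm) := by
  refine Equivalent.symm ⟨⟨(LinearEquiv.sumArrowLequivProdArrow _ _ F F).symm ≪≫ₗ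
    LinearEquiv.funCongrLeft F F finSumFinEquiv.symm, ?_⟩⟩
  rintro ⟨x, y⟩
  change (q.orthSum q').toQuadraticForm (fun i => Sum.elim x y (finSumFinEquiv.symm i)) = _
  have sum_split (g : Fin (q.dim + q'.dim) → F) : ∑ i, g i =
      ∑ i, g (finSumFinEquiv (Sum.inl i)) + ∑ i, g (finSumFinEquiv (Sum.inr i)) := by
    rw [← finSumFinEquiv.sum_comp, Fintype.sum_sum_type]
  rw [prod_apply]
  simp only [toQuadraticForm_apply, eval]
  refine (sum_split _).trans (congrArg₂ _ ?_ ?_) <;>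
    refine Finset.sum_congr rfl fun i _ => (sum_split _).trans ?_ <;> simp [orthSum]

theorem orthSum_equivalent_congr {p p' q q' : QF F}
    (hp : p.toQuadraticForm.Equivalent p'.toQuadraticForm)
    (hq : q.toQuadraticForm.Equivalent q'.toQuadraticForm) :
    (p.orthSum q).toQuadraticForm.Equivalent (p'.orthSum q').toQuadraticForm :=
  (orthSum_equivalent p q).trans ((hp.prod hq).trans (orthSum_equivalent p' q').symm)

theorem orthSum_comm_equivalent (q q' : QF F) :
    (q.orthSum q').toQuadraticForm.Equivalent (q'.orthSum q).toQuadraticForm :=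
  (orthSum_equivalent q q').trans
    (.trans ⟨IsometryEquiv.prodComm _ _⟩ (orthSum_equivalent q' q).symm)

theorem orthSum_assoc_equivalent (p q r : QF F) :
    ((p.orthSum q).orthSum r).toQuadraticForm.Equivalent
      (p.orthSum (q.orthSum r)).toQuadraticForm := by
  have hassoc : ((p.toQuadraticForm.prod q.toQuadraticForm).prod r.toQuadraticForm).Equivalent
      (p.toQuadraticForm.prod (q.toQuadraticForm.prod r.toQuadraticForm)) :=
    ⟨⟨LinearEquiv.prodAssoc F _ _ _, fun _ => (add_assoc _ _ _).symm⟩⟩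
  exact (orthSum_equivalent _ _).trans <| ((orthSum_equivalent p q).prod (.refl _)).trans <|
    hassoc.trans <| (Equivalent.prod (.refl _) (orthSum_equivalent q r).symm).trans
      (orthSum_equivalent _ _).symm

theorem orthSum_right_comm_equivalent (p q r : QF F) :
    ((p.orthSum q).orthSum r).toQuadraticForm.Equivalent
      ((p.orthSum r).orthSum q).toQuadraticForm :=
  (orthSum_assoc_equivalent p q r).trans <|
    (orthSum_equivalent_congr (.refl _) (orthSum_comm_equivalent q r)).trans
      (orthSum_assoc_equivalent p r q).symm

instance : IsEmpty (Fin (nil : QF F).dim) := Fin.isEmpty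

theorem nil_toQuadraticForm : (nil : QF F).toQuadraticForm = 0 :=
  QuadraticMap.ext fun x => (toQuadraticForm_apply nil x).trans (Finset.sum_of_isEmpty _)

theorem nil_orthSum_equivalent (q : QF F) :
    (nil.orthSum q).toQuadraticForm.Equivalent q.toQuadraticForm := by
  refine (orthSum_equivalent nil q).trans ⟨⟨LinearEquiv.uniqueProd, fun x => ?_⟩⟩
  rw [prod_apply, nil_toQuadraticForm]
  exact (zero_add _).symm

theorem orthSum_nil_equivalent (q : QF F) :
    (q.orthSum nil).toQuadraticForm.Equivalent q.toQuadraticForm :=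
  (orthSum_comm_equivalent q nil).trans (nil_orthSum_equivalent q)

theorem smul_toQuadraticForm (a : F) (q : QF F) :
    (smul a q).toQuadraticForm = a • q.toQuadraticForm := by
  refine QuadraticMap.ext fun x => ?_
  refine (toQuadraticForm_apply (smul a q) x).trans (Eq.trans ?_
    (congrArg (a * ·) (toQuadraticForm_apply q x).symm))
  simp only [eval, smul, Matrix.smul_apply, smul_eq_mul, Finset.mul_sum, mul_assoc]
  rfl

theorem zeros_toQuadraticForm (l : ℕ) : (zeros l : QF F).toQuadraticForm = 0 := by
  refine QuadraticMap.ext fun x => ?_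
  rw [toQuadraticForm_apply]
  simp [eval, zeros, diag]
  rfl

theorem zeros_zero : (zeros 0 : QF F) = nil := congrArg (mk 0) (Subsingleton.elim _ _)

theorem bin_toQuadraticForm_apply (c d : F) (x : Fin 2 → F) :
    (bin c d).toQuadraticForm x = c * x 0 ^ 2 + d * x 1 ^ 2 + x 0 * x 1 := by
  refine (toQuadraticForm_apply (bin c d) x).trans ((Fin.sum_univ_two _).trans ?_)
  refine (congrArg₂ _ (Fin.sum_univ_two _) (Fin.sum_univ_two _)).trans ?_
  simp [bin]
  ring

/-- The orthogonal sum `[c₁, d₁] ⊥ … ⊥ [cₙ, dₙ]`; see `blockForm` for its underlying form. -/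
def block {n : ℕ} (c d : Fin n → F) : QF F := sumList (List.ofFn fun i => bin (c i) (d i))

theorem block_equivalent {n : ℕ} (c d : Fin n → F) :
    (block c d).toQuadraticForm.Equivalent (blockForm c d) := by
  induction n with
  | zero =>
    have : Subsingleton (Fin (block c d).dim → F) := inferInstanceAs (Subsingleton (Fin 0 → F))
    refine ⟨⟨0, fun x => ?_⟩⟩
    rw [Subsingleton.elim x 0, map_zero]
    exact map_zero (blockForm c d)
  | succ n ih =>
    have hblock : block c d = orthSum (bin (c 0) (d 0)) (block (Fin.tail c) (Fin.tail d)) := by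
      rw [block, List.ofFn_succ]; rfl
    rw [hblock]
    refine (orthSum_equivalent _ _).trans (((Equivalent.refl _).prod (ih _ _)).trans ?_)
    let e := (LinearEquiv.finTwoArrow F F).prodCongr (.refl F ((Fin n → F) × (Fin n → F))) ≪≫ₗ
      LinearEquiv.prodProdProdComm F F F (Fin n → F) (Fin n → F) ≪≫ₗ
        (Fin.consLinearEquiv F fun _ => F).prodCongr (Fin.consLinearEquiv F fun _ => F)
    refine ⟨⟨e, ?_⟩⟩
    rintro ⟨p, x, y⟩
    change blockForm c d (Fin.cons (p (0 : Fin 2)) x, Fin.cons (p (1 : Fin 2)) y) = _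
    rw [prod_apply, blockForm_apply, Fin.sum_univ_succ, blockForm_apply]
    exact congrArg (· + _) (bin_toQuadraticForm_apply (c 0) (d 0) p).symm

theorem hyp_eq_block (k : ℕ) : (hyp k : QF F) = block (fun _ : Fin k => 0) fun _ => 0 := by
  rw [hyp, block, List.ofFn_const]
  rfl

end Basic

section Map

variable {F E : Type*} [Field F] [Field E] (f : F →+* E)

theorem eval_map (q : QF F) (x : Fin q.dim → F) : (q.map f).eval (f ∘ x) = f (q.eval x) := by
  simp only [eval, map_sum, map_mul]
  rfl

theorem map_toQuadraticForm_comp (q : QF F) (x : Fin q.dim → F) :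
    (q.map f).toQuadraticForm (f ∘ x) = f (q.toQuadraticForm x) := by
  rw [toQuadraticForm_apply, eval_map, toQuadraticForm_apply]

theorem polar_map_toQuadraticForm_comp (q : QF F) (x y : Fin q.dim → F) :
    polar (q.map f).toQuadraticForm (f ∘ x) (f ∘ y) = f (polar q.toQuadraticForm x y) := by
  have hadd : f ∘ x + f ∘ y = f ∘ (x + y) := funext fun i => (map_add f _ _).symm
  simp only [polar, map_sub, ← map_toQuadraticForm_comp]
  exact congrArg (fun v => (q.map f).toQuadraticForm v - _ - _) hadd

theorem map_orthSum (q q' : QF F) : (q.orthSum q').map f = (q.map f).orthSum (q'.map f) := by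
  have hc : (reindex finSumFinEquiv finSumFinEquiv (fromBlocks q.c 0 0 q'.c)).map f =
      reindex finSumFinEquiv finSumFinEquiv (fromBlocks (q.c.map f) 0 0 (q'.c.map f)) := by
    rw [reindex_apply, reindex_apply, ← submatrix_map, fromBlocks_map,
      Matrix.map_zero _ (map_zero f), Matrix.map_zero _ (map_zero f)]
  exact congrArg (mk _) hc

theorem map_smul (a : F) (q : QF F) : (smul a q).map f = smul (f a) (q.map f) := by
  exact congrArg (mk _) (Matrix.ext fun i j => map_mul f a (q.c i j))

theorem map_bin (c d : F) : (bin c d).map f = bin (f c) (f d) := by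
  have hc : !![c, 1; 0, d].map f = !![f c, 1; 0, f d] := by
    ext i j
    fin_cases i <;> fin_cases j <;> simp
  exact congrArg (mk _) hc

theorem map_equivalent_blockForm [CharP F 2] {ι : Type*} [Fintype ι] {q : QF F} {c d : ι → F}
    (h : q.toQuadraticForm.Equivalent (blockForm c d)) :
    (q.map f).toQuadraticForm.Equivalent (blockForm (fun i => f (c i)) fun i => f (d i)) := by
  classical
  obtain ⟨e⟩ := h
  have hdim : q.dim = 2 * Fintype.card ι := by
    simpa [two_mul] using e.toLinearEquiv.finrank_eq
  let l i : Fin q.dim → F := e.symm (Pi.single i 1, 0)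
  let w i : Fin q.dim → F := e.symm (0, Pi.single i 1)
  have hl i : q.toQuadraticForm (l i) = c i := by
    rw [← e.map_app, e.apply_symm_apply]
    simp [blockForm_apply, Pi.single_apply]
  have hw i : q.toQuadraticForm (w i) = d i := by
    rw [← e.map_app, e.apply_symm_apply]
    simp [blockForm_apply, Pi.single_apply]
  have hll i j : polar q.toQuadraticForm (l i) (l j) = 0 := by
    rw [polar_isometryEquiv e.symm]
    simp [polar_blockForm]
  have hww i j : polar q.toQuadraticForm (w i) (w j) = 0 := by
    rw [polar_isometryEquiv e.symm]
    simp [polar_blockForm]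
  have hlw i j : polar q.toQuadraticForm (l i) (w j) = if i = j then 1 else 0 := by
    rw [polar_isometryEquiv e.symm]
    simp [polar_blockForm, Pi.single_apply, eq_comm]
  have key := equivalent_blockForm (Q := (q.map f).toQuadraticForm) (l := fun i => f ∘ l i)
    (w := fun i => f ∘ w i)
    (fun i j => by rw [polar_map_toQuadraticForm_comp, hll, map_zero])
    (fun i j => by rw [polar_map_toQuadraticForm_comp, hww, map_zero])
    (fun i j => by rw [polar_map_toQuadraticForm_comp, hlw]; split_ifs <;> simp)
    (by rw [finrank_fin_fun]; exact hdim)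
  simpa only [map_toQuadraticForm_comp, hl, hw] using key

end Map

section Nonsingular

variable {F : Type*} [Field F]

theorem Nonsingular.orthSum {q q' : QF F} (hq : q.Nonsingular) (hq' : q'.Nonsingular) :
    (q.orthSum q').Nonsingular :=
  nonsingular_iff.2 (nondegenerate_polarBilin_congr (orthSum_equivalent q q').symm
    (nondegenerate_polarBilin_prod (nonsingular_iff.1 hq) (nonsingular_iff.1 hq')))

theorem Nonsingular.smul {q : QF F} {a : F} (ha : a ≠ 0) (hq : q.Nonsingular) :
    (smul a q).Nonsingular := by
  intro (x : Fin q.dim → F) (hx : (a • q.c + (a • q.c)ᵀ) *ᵥ x = 0)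
  rw [transpose_smul, ← smul_add, smul_mulVec] at hx
  exact hq x ((smul_eq_zero.1 hx).resolve_left ha)

theorem nonsingular_nil : (nil : QF F).Nonsingular := fun x _ => Subsingleton.elim x 0

theorem nonsingular_sumList {l : List (QF F)} (hl : ∀ q ∈ l, q.Nonsingular) :
    (sumList l).Nonsingular := by
  induction l with
  | nil => exact nonsingular_nil
  | cons q l ih =>
    exact (hl q List.mem_cons_self).orthSum (ih fun q' hq' => hl q' (List.mem_cons_of_mem q hq'))

theorem isMetabolic_zeros (l : ℕ) : IsMetabolic (zeros l : QF F).toQuadraticForm := by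
  rw [zeros_toQuadraticForm]
  exact .zero

theorem isMetabolic_orthSum {q q' : QF F} (hq : IsMetabolic q.toQuadraticForm)
    (hq' : IsMetabolic q'.toQuadraticForm) : IsMetabolic (q.orthSum q').toQuadraticForm :=
  (hq.prod hq').congr (orthSum_equivalent q q').symm

variable [CharP F 2]

theorem nonsingular_block {n : ℕ} (c d : Fin n → F) : (block c d).Nonsingular :=
  nonsingular_iff.2 (nondegenerate_polarBilin_congr (block_equivalent c d).symm
    (nondegenerate_polarBilin_blockForm c d))

theorem nonsingular_bin (c d : F) : (bin c d).Nonsingular := by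
  intro (x : Fin 2 → F) (hx : (!![c, 1; 0, d] + !![c, 1; 0, d]ᵀ) *ᵥ x = 0)
  have hx1 : x 1 = 0 := by simpa [mulVec, CharTwo.add_self_eq_zero] using congrFun hx 0
  have hx0 : x 0 = 0 := by simpa [mulVec, CharTwo.add_self_eq_zero] using congrFun hx 1
  exact funext (Fin.forall_fin_two.2 ⟨hx0, hx1⟩)

theorem Nonsingular.exists_equivalent_block {q : QF F} (hq : q.Nonsingular) :
    ∃ (n : ℕ) (c d : Fin n → F), q.toQuadraticForm.Equivalent (block c d).toQuadraticForm := by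
  obtain ⟨n, c, d, h⟩ := exists_equivalent_blockForm (nonsingular_iff.1 hq)
  exact ⟨n, c, d, h.trans (block_equivalent c d).symm⟩

theorem Nonsingular.map {E : Type*} [Field E] [CharP E 2] (f : F →+* E) {q : QF F}
    (hq : q.Nonsingular) : (q.map f).Nonsingular := by
  obtain ⟨n, c, d, h⟩ := exists_equivalent_blockForm (nonsingular_iff.1 hq)
  exact nonsingular_iff.2 (nondegenerate_polarBilin_congr (map_equivalent_blockForm f h).symm
    (nondegenerate_polarBilin_blockForm _ _))

theorem isMetabolic_map {E : Type*} [Field E] [CharP E 2] (f : F →+* E) {q : QF F}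
    (hq : q.Nonsingular) (h : IsMetabolic q.toQuadraticForm) :
    IsMetabolic (q.map f).toQuadraticForm := by
  obtain ⟨n, hn⟩ := h.exists_equivalent_blockForm_zero (nonsingular_iff.1 hq)
  have hmap := map_equivalent_blockForm f hn
  simp only [Pi.zero_apply, map_zero] at hmap
  exact (isMetabolic_blockForm_zero n).congr hmap.symm

theorem nonsingular_hyp (k : ℕ) : (hyp k : QF F).Nonsingular := by
  rw [hyp_eq_block]
  exact nonsingular_block _ _

theorem isMetabolic_hyp (k : ℕ) : IsMetabolic (hyp k : QF F).toQuadraticForm := by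
  rw [hyp_eq_block]
  exact (isMetabolic_blockForm_zero k).congr (block_equivalent _ _).symm

theorem hyperbolic_iff_isMetabolic {q : QF F} (hq : q.Nonsingular) :
    Hyperbolic q ↔ IsMetabolic q.toQuadraticForm := by
  constructor
  · rintro ⟨k, h⟩
    exact (isMetabolic_hyp k).congr (isometric_iff.1 h).symm
  · intro h
    obtain ⟨k, hk⟩ := h.exists_equivalent_blockForm_zero (nonsingular_iff.1 hq)
    refine ⟨k, isometric_iff.2 (hk.trans ?_)⟩
    rw [hyp_eq_block]
    exact (block_equivalent _ _).symm

theorem isMetabolic_of_orthSum_hyp_zeros {q : QF F} (hq : q.Nonsingular) {k l : ℕ}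
    (h : IsMetabolic (q.orthSum ((hyp k).orthSum (zeros l))).toQuadraticForm) :
    IsMetabolic q.toQuadraticForm := by
  have hhyp := isMetabolic_hyp (F := F) k
  have h' : IsMetabolic ((q.orthSum (hyp k)).toQuadraticForm.prod (zeros l).toQuadraticForm) :=
    h.congr ((orthSum_assoc_equivalent q _ _).symm.trans (orthSum_equivalent _ _))
  rw [zeros_toQuadraticForm] at h'
  exact (h'.of_prod_zero.congr (orthSum_equivalent q _)).of_prod (nonsingular_iff.1 hq)
    (nonsingular_iff.1 (nonsingular_hyp k)) hhyp

theorem wittEquiv_iff_isMetabolic {q q' : QF F} (hq : q.Nonsingular) (hq' : q'.Nonsingular) :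
    WittEquiv q q' ↔ IsMetabolic (q.orthSum q').toQuadraticForm := by
  have hq'q' : IsMetabolic (q'.orthSum q').toQuadraticForm :=
    .congr (orthSum_equivalent q' q').symm (.prod_self (nonsingular_iff.1 hq'))
  constructor
  · rintro ⟨k, k', l, l', h⟩
    refine isMetabolic_of_orthSum_hyp_zeros (hq.orthSum hq') (k := k) (l := l) (.congr ?_
      (isMetabolic_orthSum hq'q' (isMetabolic_orthSum (isMetabolic_hyp k') (isMetabolic_zeros l'))))
    exact (orthSum_right_comm_equivalent q' q' _).trans <|
      (orthSum_equivalent_congr (isometric_iff.1 h).symm (.refl _)).trans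
        (orthSum_right_comm_equivalent q _ q')
  · intro h
    obtain ⟨k, hk⟩ := (hyperbolic_iff_isMetabolic (hq'.orthSum hq')).2 hq'q'
    obtain ⟨k', hk'⟩ := (hyperbolic_iff_isMetabolic (hq.orthSum hq')).2 h
    refine ⟨k, k', 0, 0, ?_⟩
    rw [isometric_iff] at hk hk' ⊢
    rw [zeros_zero]
    have hk_nil := hk.trans (orthSum_nil_equivalent (hyp k)).symm
    have hk'_nil := hk'.trans (orthSum_nil_equivalent (hyp k')).symm
    exact (orthSum_equivalent_congr (.refl _) hk_nil.symm).trans <|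
      (orthSum_assoc_equivalent q q' q').symm.trans <|
        (orthSum_comm_equivalent _ q').trans (orthSum_equivalent_congr (.refl _) hk'_nil)

end Nonsingular

section Smul

variable {F : Type*} [Field F]

theorem isMetabolic_smul_prod_smul {a : F} (ha : a ≠ 0) {q q' : QF F}
    (h : IsMetabolic (q.toQuadraticForm.prod q'.toQuadraticForm)) :
    IsMetabolic ((smul a q).toQuadraticForm.prod (smul a q').toQuadraticForm) := by
  rw [smul_toQuadraticForm, smul_toQuadraticForm]
  exact (smul_prod_smul a q.toQuadraticForm q'.toQuadraticForm).symm ▸ h.smul ha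

theorem smul_orthSum_equivalent (a : F) (q q' : QF F) :
    (smul a (q.orthSum q')).toQuadraticForm.Equivalent
      ((smul a q).orthSum (smul a q')).toQuadraticForm := by
  refine Equivalent.trans ?_ (orthSum_equivalent (smul a q) (smul a q')).symm
  obtain ⟨e⟩ := orthSum_equivalent q q'
  refine ⟨⟨e.toLinearEquiv, fun x => ?_⟩⟩
  rw [smul_toQuadraticForm, smul_toQuadraticForm, smul_toQuadraticForm]
  refine (DFunLike.congr_fun (smul_prod_smul a _ _) (e x)).trans ?_
  exact congrArg (a * ·) (e.map_app x)

theorem smul_sq_equivalent (u : Fˣ) (q : QF F) :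
    (smul ((u ^ 2 : Fˣ) : F) q).toQuadraticForm.Equivalent q.toQuadraticForm := by
  refine ⟨⟨LinearEquiv.smulOfUnit u, fun x => ?_⟩⟩
  rw [smul_toQuadraticForm]
  refine (QuadraticMap.map_smul q.toQuadraticForm (u : F) x).trans ?_
  rw [← pow_two, Units.val_pow_eq_pow_val]
  rfl

theorem smul_bin_equivalent (u : Fˣ) (c d : F) :
    (smul (u : F) (bin c (u * d))).toQuadraticForm.Equivalent (bin (u * c) d).toQuadraticForm := by
  refine ⟨⟨LinearEquiv.piCongrRight ![.refl F F, .smulOfUnit u], fun (x : Fin 2 → F) => ?_⟩⟩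
  rw [smul_toQuadraticForm]
  refine (bin_toQuadraticForm_apply (u * c) d _).trans ?_
  refine Eq.trans ?_ (congrArg ((u : F) * ·) (bin_toQuadraticForm_apply c (u * d) x).symm)
  change u * c * x 0 ^ 2 + d * (u * x 1) ^ 2 + x 0 * (u * x 1) = _
  ring

end Smul

end QF

section WittGroup

open QF

variable (F : Type*) [Field F] [CharP F 2]

/-- Witt equivalence of nonsingular forms in characteristic 2, where `-q = q`: the sum `q ⊥ q'` is
metabolic. `QF.wittEquiv_iff_isMetabolic` relates this to `QF.WittEquiv`. -/
def wittSetoid : Setoid {q : QF F // q.Nonsingular} where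
  r q q' := IsMetabolic (q.1.toQuadraticForm.prod q'.1.toQuadraticForm)
  iseqv :=
    { refl q := .prod_self (nonsingular_iff.1 q.2)
      symm h := h.prod_symm
      trans {q q' q''} h h' := h.prod_trans (nonsingular_iff.1 q.2) (nonsingular_iff.1 q'.2)
        (nonsingular_iff.1 q''.2) h' }

/-- The Witt group `W_q(F)` of nonsingular quadratic forms over a field of characteristic 2. -/
def WittGroup : Type _ := Quotient (wittSetoid F)

end WittGroup

namespace WittGroup

open QuadraticMap Matrix QF

section Group

variable {F : Type*} [Field F] [CharP F 2]

/-- The Witt class of a nonsingular form. -/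
def mk (q : QF F) (hq : q.Nonsingular) : WittGroup F := Quotient.mk (wittSetoid F) ⟨q, hq⟩

theorem exists_mk_eq (w : WittGroup F) : ∃ q hq, mk q hq = w := by
  obtain ⟨⟨q, hq⟩, rfl⟩ := Quotient.exists_rep w
  exact ⟨q, hq, rfl⟩

theorem mk_eq_mk_iff {q q' : QF F} {hq : q.Nonsingular} {hq' : q'.Nonsingular} :
    mk q hq = mk q' hq' ↔ IsMetabolic (q.toQuadraticForm.prod q'.toQuadraticForm) :=
  Quotient.eq

theorem mk_eq_mk_of_equivalent {q q' : QF F} {hq : q.Nonsingular} {hq' : q'.Nonsingular}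
    (h : q.toQuadraticForm.Equivalent q'.toQuadraticForm) : mk q hq = mk q' hq' :=
  mk_eq_mk_iff.2 (.congr ((Equivalent.refl _).prod h) (.prod_self (nonsingular_iff.1 hq)))

instance : Zero (WittGroup F) := ⟨mk nil nonsingular_nil⟩

instance : Add (WittGroup F) where
  add := Quotient.map₂ (fun q q' => ⟨q.1.orthSum q'.1, q.2.orthSum q'.2⟩)
    fun p p' (hp : IsMetabolic _) q q' (hq : IsMetabolic _) =>
      (hp.prod hq).congr (Equivalent.trans ⟨IsometryEquiv.prodProdProdComm _ _ _ _⟩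
        ((orthSum_equivalent p.1 q.1).symm.prod (orthSum_equivalent p'.1 q'.1).symm))

theorem zero_def : (0 : WittGroup F) = mk nil nonsingular_nil := rfl

theorem mk_orthSum {q q' : QF F} (hq : q.Nonsingular) (hq' : q'.Nonsingular) :
    mk (q.orthSum q') (hq.orthSum hq') = mk q hq + mk q' hq' := rfl

theorem mk_eq_zero_iff {q : QF F} {hq : q.Nonsingular} :
    mk q hq = 0 ↔ IsMetabolic q.toQuadraticForm := by
  rw [zero_def, mk_eq_mk_iff, nil_toQuadraticForm]
  exact ⟨fun h => h.of_prod_zero, fun h => h.prod .zero⟩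

instance : Neg (WittGroup F) := ⟨id⟩

instance : AddCommGroup (WittGroup F) where
  nsmul := nsmulRec
  zsmul := zsmulRec
  add_assoc u v w := by
    obtain ⟨p, hp, rfl⟩ := exists_mk_eq u
    obtain ⟨q, hq, rfl⟩ := exists_mk_eq v
    obtain ⟨r, hr, rfl⟩ := exists_mk_eq w
    exact mk_eq_mk_of_equivalent (orthSum_assoc_equivalent p q r)
  add_comm u v := by
    obtain ⟨p, hp, rfl⟩ := exists_mk_eq u
    obtain ⟨q, hq, rfl⟩ := exists_mk_eq v
    exact mk_eq_mk_of_equivalent (orthSum_comm_equivalent p q)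
  zero_add w := by
    obtain ⟨q, hq, rfl⟩ := exists_mk_eq w
    exact mk_eq_mk_of_equivalent (nil_orthSum_equivalent q)
  add_zero w := by
    obtain ⟨q, hq, rfl⟩ := exists_mk_eq w
    exact mk_eq_mk_of_equivalent (orthSum_nil_equivalent q)
  neg_add_cancel w := by
    obtain ⟨q, hq, rfl⟩ := exists_mk_eq w
    exact mk_eq_zero_iff.2
      (.congr (orthSum_equivalent q q).symm (.prod_self (nonsingular_iff.1 hq)))

theorem add_self (w : WittGroup F) : w + w = 0 := neg_add_cancel w

theorem eq_of_add_eq_zero {v w : WittGroup F} (h : v + w = 0) : v = w :=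
  add_right_cancel (h.trans (add_self w).symm)

theorem mk_sumList_ofFn {n : ℕ} {q : Fin n → QF F} (hq : ∀ i, (q i).Nonsingular) :
    mk (sumList (List.ofFn q)) (nonsingular_sumList (List.forall_mem_ofFn_iff.2 hq)) =
      ∑ i, mk (q i) (hq i) := by
  induction n with
  | zero => exact mk_eq_mk_of_equivalent (by rw [List.ofFn_zero]; rfl)
  | succ n ih =>
    rw [Fin.sum_univ_succ, ← ih fun i => hq i.succ, ← mk_orthSum]
    exact mk_eq_mk_of_equivalent (by rw [List.ofFn_succ]; rfl)

theorem mk_eq_zero_iff_hyperbolic {q : QF F} {hq : q.Nonsingular} :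
    mk q hq = 0 ↔ Hyperbolic q :=
  mk_eq_zero_iff.trans (hyperbolic_iff_isMetabolic hq).symm

theorem mk_eq_mk_iff_wittEquiv {q q' : QF F} {hq : q.Nonsingular} {hq' : q'.Nonsingular} :
    mk q hq = mk q' hq' ↔ WittEquiv q q' := by
  rw [mk_eq_mk_iff, wittEquiv_iff_isMetabolic hq hq']
  exact ⟨.congr (orthSum_equivalent q q').symm, .congr (orthSum_equivalent q q')⟩

end Group

section Symbol

variable {F : Type*} [Field F] [CharP F 2]

theorem sum_mk_bin_eq_zero {n : ℕ} {Z : Matrix (Fin n) (Fin n) F} (hZ : Z.IsSymm)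
    {c d : Fin n → F} (hc : ∀ i, c i = Z i i + ∑ j, d j * Z i j ^ 2) :
    ∑ i, mk (bin (c i) (d i)) (nonsingular_bin _ _) = 0 := by
  rw [← mk_sumList_ofFn fun i => nonsingular_bin (c i) (d i), mk_eq_zero_iff]
  exact (isMetabolic_blockForm_of_isSymm hZ hc).congr (block_equivalent c d).symm

theorem mk_bin_comm (c d : F) :
    mk (bin c d) (nonsingular_bin c d) = mk (bin d c) (nonsingular_bin d c) := by
  refine eq_of_add_eq_zero ?_
  have h := sum_mk_bin_eq_zero (Z := !![0, 1; 1, 0]) (c := ![c, d]) (d := ![d, c])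
    (IsSymm.ext <| by simp [Fin.forall_fin_two]) (by simp [Fin.forall_fin_two])
  simpa [Fin.sum_univ_two] using h

theorem mk_bin_add (c c' d : F) :
    mk (bin (c + c') d) (nonsingular_bin _ d) =
      mk (bin c d) (nonsingular_bin c d) + mk (bin c' d) (nonsingular_bin c' d) := by
  refine eq_of_add_eq_zero ?_
  have add_sq_cancel : d * (c + c') ^ 2 + (d * c ^ 2 + d * c' ^ 2) = 0 := by
    rw [CharTwo.add_sq, mul_add, CharTwo.add_self_eq_zero]
  have h := sum_mk_bin_eq_zero (Z := !![c + c', c, c'; c, c, 0; c', 0, c'])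
    (c := ![c + c', c, c']) (d := fun _ => d) (IsSymm.ext <| by simp [Fin.forall_fin_succ]) <| by
      simp [Fin.forall_fin_succ, Fin.sum_univ_succ, add_sq_cancel, CharTwo.add_self_eq_zero]
  simpa [Fin.sum_univ_succ] using h

/-- The class of the binary form `[c, d]`, as a biadditive map. -/
def symbol : F →+ F →+ WittGroup F :=
  AddMonoidHom.mk' (fun c => AddMonoidHom.mk' (fun d => mk (bin c d) (nonsingular_bin c d))
    fun d d' => by simp only [mk_bin_comm c, mk_bin_add])
    fun c c' => AddMonoidHom.ext fun d => mk_bin_add c c' d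

theorem symbol_apply (c d : F) : symbol c d = mk (bin c d) (nonsingular_bin c d) := rfl

theorem symbol_comm (c d : F) : symbol c d = symbol d c := mk_bin_comm c d

theorem sum_symbol_eq_zero_iff {n : ℕ} {c d : Fin n → F} :
    ∑ i, symbol (c i) (d i) = 0 ↔ IsMetabolic (blockForm c d) := by
  simp only [symbol_apply]
  rw [← mk_sumList_ofFn fun i => nonsingular_bin (c i) (d i), mk_eq_zero_iff]
  exact ⟨.congr (block_equivalent c d), .congr (block_equivalent c d).symm⟩

theorem sum_symbol_eq_zero {n : ℕ} {Z : Matrix (Fin n) (Fin n) F} (hZ : Z.IsSymm)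
    {c d : Fin n → F} (hc : ∀ i, c i = Z i i + ∑ j, d j * Z i j ^ 2) :
    ∑ i, symbol (c i) (d i) = 0 :=
  sum_mk_bin_eq_zero hZ hc

theorem symbol_sq_mul_self (z d : F) : symbol (z ^ 2 * d) d = symbol z d := by
  refine eq_of_add_eq_zero ?_
  have h := sum_symbol_eq_zero (Z := !![z]) (c := ![z ^ 2 * d + z]) (d := ![d])
    (IsSymm.ext <| by simp) (by simp [add_comm, mul_comm])
  simpa using h

theorem symbol_sq_mul (x c d : F) : symbol (x ^ 2 * c) d = symbol c (x ^ 2 * d) := by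
  rcases eq_or_ne x 0 with rfl | hx
  · simp
  rw [symbol_comm]
  refine eq_of_add_eq_zero ?_
  have h := sum_symbol_eq_zero (Z := !![0, x⁻¹; x⁻¹, 0]) (c := ![d, c])
    (d := ![x ^ 2 * c, x ^ 2 * d]) (IsSymm.ext <| by simp [Fin.forall_fin_two])
    (by simp only [Fin.forall_fin_two, Fin.sum_univ_two]; constructor <;> simp <;> field_simp)
  simpa [Fin.sum_univ_two] using h

theorem exists_sum_symbol_eq (w : WittGroup F) :
    ∃ (n : ℕ) (c d : Fin n → F), ∑ i, symbol (c i) (d i) = w := by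
  obtain ⟨q, hq, rfl⟩ := exists_mk_eq w
  obtain ⟨n, c, d, h⟩ := hq.exists_equivalent_block
  refine ⟨n, c, d, ?_⟩
  simp only [symbol_apply]
  rw [← mk_sumList_ofFn]
  exact mk_eq_mk_of_equivalent h.symm

end Symbol

section Scale

variable {F : Type*} [Field F] [CharP F 2]

/-- The action of the one-dimensional bilinear form `⟨u⟩`, sending the class of `q` to that of
`u • q`. -/
def scale (u : Fˣ) : WittGroup F →+ WittGroup F :=
  AddMonoidHom.mk' (Quotient.map (fun q => ⟨smul (u : F) q.1, q.2.smul u.ne_zero⟩)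
    fun q q' (h : IsMetabolic _) => isMetabolic_smul_prod_smul u.ne_zero h) fun v w => by
      obtain ⟨p, hp, rfl⟩ := exists_mk_eq v
      obtain ⟨q, hq, rfl⟩ := exists_mk_eq w
      exact mk_eq_mk_of_equivalent (smul_orthSum_equivalent (u : F) p q)

theorem scale_sq (u : Fˣ) (w : WittGroup F) : scale (u ^ 2) w = w := by
  obtain ⟨q, hq, rfl⟩ := exists_mk_eq w
  exact mk_eq_mk_of_equivalent (smul_sq_equivalent u q)

theorem scale_symbol (u : Fˣ) (c d : F) : scale u (symbol c (u * d)) = symbol (u * c) d :=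
  mk_eq_mk_of_equivalent (smul_bin_equivalent u c d)

/-- The action of the bilinear form `⟨1, u⟩`, so that the range of `pfister u` is
`⟨1, u⟩ ⊗ W_q(F)`. -/
def pfister (u : Fˣ) : WittGroup F →+ WittGroup F := .id _ + scale u

theorem pfister_mk (u : Fˣ) {q : QF F} (hq : q.Nonsingular) :
    pfister u (mk q hq) =
      mk (q.orthSum (smul (u : F) q)) (hq.orthSum (hq.smul u.ne_zero)) := rfl

theorem sum_pfister_mk {n : ℕ} (u : Fin n → Fˣ) {τ : Fin n → QF F}
    (hτ : ∀ i, (τ i).Nonsingular) :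
    ∑ i, pfister (u i) (mk (τ i) (hτ i)) =
      mk (sumList (List.ofFn fun i => (τ i).orthSum (smul (u i : F) (τ i))))
        (nonsingular_sumList (List.forall_mem_ofFn_iff.2 fun i =>
          (hτ i).orthSum ((hτ i).smul (u i).ne_zero))) := by
  simp only [pfister_mk, mk_sumList_ofFn fun i => (hτ i).orthSum ((hτ i).smul (u i).ne_zero)]

theorem pfister_symbol (u : Fˣ) (c d : F) :
    pfister u (symbol c (u * d)) = symbol c (u * d) + symbol (u * c) d :=
  congrArg (_ + ·) (scale_symbol u c d)

theorem pfister_sq (u : Fˣ) (w : WittGroup F) : pfister (u ^ 2) w = 0 := by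
  rw [pfister, AddMonoidHom.add_apply, scale_sq]
  exact add_self w

end Scale

section Restriction

variable {F : Type*} [Field F] [CharP F 2]
variable {E : Type*} [Field E] [CharP E 2] (f : F →+* E)

/-- Extension of scalars `W_q(F) → W_q(E)`. -/
def restriction : WittGroup F →+ WittGroup E :=
  AddMonoidHom.mk' (Quotient.map (fun q => ⟨q.1.map f, q.2.map f⟩)
    fun q q' (h : IsMetabolic _) => by
      have hmap := isMetabolic_map f (q.2.orthSum q'.2) (h.congr (orthSum_equivalent _ _).symm)
      rw [map_orthSum] at hmap
      exact hmap.congr (orthSum_equivalent _ _)) fun v w => by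
      obtain ⟨p, hp, rfl⟩ := exists_mk_eq v
      obtain ⟨q, hq, rfl⟩ := exists_mk_eq w
      exact mk_eq_mk_of_equivalent (by rw [map_orthSum])

theorem restriction_mk {q : QF F} (hq : q.Nonsingular) :
    restriction f (mk q hq) = mk (q.map f) (hq.map f) := rfl

theorem restriction_symbol (c d : F) : restriction f (symbol c d) = symbol (f c) (f d) :=
  mk_eq_mk_of_equivalent (by rw [map_bin])

theorem restriction_pfister (u : Fˣ) (w : WittGroup F) :
    restriction f (pfister u w) = pfister (Units.map f u) (restriction f w) := by
  obtain ⟨q, hq, rfl⟩ := exists_mk_eq w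
  exact mk_eq_mk_of_equivalent (by rw [map_orthSum, QF.map_smul]; rfl)

end Restriction

end WittGroup

section Balanced

variable {R A : Type*} [CommRing R] [AddCommGroup A]

/-- The subring of scalars that can be moved from one argument of a biadditive map to the other. -/
def balancedSubring (φ : R →+ R →+ A) : Subring R where
  carrier := {y | ∀ c d, φ (y * c) d = φ c (y * d)}
  one_mem' c d := by rw [one_mul, one_mul]
  mul_mem' {y z} hy hz c d := by rw [mul_assoc, hy, hz, ← mul_assoc, mul_comm z]
  zero_mem' c d := by simp
  add_mem' {y z} hy hz c d := by
    rw [add_mul, add_mul, map_add, AddMonoidHom.add_apply, hy, hz, map_add]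
  neg_mem' {y} hy c d := by
    rw [neg_mul, neg_mul, map_neg, AddMonoidHom.neg_apply, hy, map_neg]

theorem exists_linearIndependent_sum_eq {K F : Type*} [Field K] [CommRing F] {φ : F →+ F →+ A}
    (σ : K →+* balancedSubring φ) {n : ℕ} (c d : Fin n → F) :
    ∃ (m : ℕ) (c' b : Fin m → F), (∀ y : Fin m → K, ∑ k, σ (y k) * b k = 0 → y = 0) ∧
      ∑ k, φ (c' k) (b k) = ∑ i, φ (c i) (d i) := by
  let := Module.compHom F ((balancedSubring φ).subtype.comp σ)
  have := FiniteDimensional.span_of_finite K (Set.finite_range d)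
  let B := Module.finBasis K (Submodule.span K (Set.range d))
  let y i := B.repr ⟨d i, Submodule.subset_span ⟨i, rfl⟩⟩
  have hd i : ∑ k, σ (y i k) * (B k : F) = d i :=
    (Submodule.coe_sum _ _ _).symm.trans (congrArg Subtype.val (B.sum_repr _))
  refine ⟨_, fun k => ∑ i, σ (y i k) * c i, fun k => B k, fun z hz => ?_, ?_⟩
  · have hB : LinearIndependent K fun k => (B k : F) :=
      B.linearIndependent.map' (Submodule.subtype _) (Submodule.ker_subtype _)
    exact funext (Fintype.linearIndependent_iff.1 hB z hz)
  · simp only [map_sum, AddMonoidHom.finsetSum_apply, (σ _).2 _ _]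
    rw [Finset.sum_comm]
    exact Finset.sum_congr rfl fun i _ => by rw [← map_sum, hd]

-- With `c i = z i + ∑ j, σ (Z i j) * d j`, balancedness and the symmetry of `Z` cancel the
-- off-diagonal terms, and `σ (Z i i) = (z i) ^ 2` cancels the diagonal ones.
theorem sum_eq_zero_of_isSymm {F K : Type*} [CommRing F] [CommRing K] {f : F →+* K}
    (hf : Function.Injective f) (hA : ∀ w : A, w + w = 0) {φ : F →+ F →+ A}
    (φ_comm : ∀ c d, φ c d = φ d c) (φ_sq_mul_self : ∀ z d, φ (z ^ 2 * d) d = φ z d)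
    {σ : K → balancedSubring φ} (hσ : ∀ z, f (σ z) = z ^ 2) {ι : Type*} [Fintype ι] {c d : ι → F}
    {Z : Matrix ι ι K} (hZ : Z.IsSymm) (hc : ∀ i, f (c i) = Z i i + ∑ j, f (d j) * Z i j ^ 2) :
    ∑ i, φ (c i) (d i) = 0 := by
  let z i : F := c i - ∑ j, σ (Z i j) * d j
  have hz i : f (z i) = Z i i := by
    simp only [z, map_sub, map_sum, map_mul, hσ, hc, mul_comm (Z _ _ ^ 2), add_sub_cancel_right]
  have σ_diag i : (σ (Z i i) : F) = z i ^ 2 := hf (by rw [hσ, map_pow, hz])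
  calc ∑ i, φ (c i) (d i)
    _ = ∑ i, φ (z i) (d i) + ∑ i, ∑ j, φ (σ (Z i j) * d j) (d i) := by
      simp only [z, map_sub, map_sum, AddMonoidHom.sub_apply, AddMonoidHom.finsetSum_apply,
        Finset.sum_sub_distrib, sub_add_cancel]
    _ = ∑ i, φ (z i) (d i) + ∑ i, φ (z i ^ 2 * d i) (d i) := by
      rw [sum_sum_eq_sum_diag hA]
      · simp only [σ_diag]
      · exact fun i j => by rw [φ_comm, (σ _).2, φ_comm, φ_comm, hZ.apply]
    _ = 0 := by simp only [φ_sq_mul_self, hA]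

end Balanced

section Frobenius

variable {F K : Type*} [CommRing F] [CommRing K] [CharP K 2]

theorem exists_ringHom_apply_eq_sq {f : F →+* K} (hf : Function.Injective f) {S : Subring F}
    (hS : ∀ z : K, z ^ 2 ∈ S.map f) : ∃ σ : K →+* S, ∀ z, f (σ z) = z ^ 2 := by
  let e := S.equivMapOfInjective f hf
  refine ⟨e.symm.toRingHom.comp ((frobenius K 2).codRestrict (S.map f) hS), fun z => ?_⟩
  exact congrArg Subtype.val (e.apply_symm_apply ⟨z ^ 2, hS z⟩)

theorem sq_mem_map_of_adjoin_eq_top [Algebra F K] {S : Subring F} (hS : ∀ y, y ^ 2 ∈ S)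
    {s : Set K} (hs : ∀ x ∈ s, x ^ 2 ∈ S.map (algebraMap F K)) (hgen : Algebra.adjoin F s = ⊤)
    (z : K) : z ^ 2 ∈ S.map (algebraMap F K) := by
  let T := (S.map (algebraMap F K)).comap (frobenius K 2)
  have hz : z ∈ Algebra.adjoin F s := hgen ▸ Algebra.mem_top
  refine Algebra.adjoin_induction (p := fun z _ => z ∈ T) hs (fun y => ?_)
    (fun _ _ _ _ => T.add_mem) (fun _ _ _ _ => T.mul_mem) hz
  exact ⟨y ^ 2, hS y, map_pow _ _ _⟩

theorem anisotropic_weightedSumSquares {F K : Type*} [CommRing F] [Field K] {f : F →+* K}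
    (hf : Function.Injective f) {σ : K → F} (hσ : ∀ z, f (σ z) = z ^ 2) {ι : Type*} [Fintype ι]
    {b : ι → F} (hb : ∀ y : ι → K, ∑ i, σ (y i) * b i = 0 → y = 0) :
    (QuadraticMap.weightedSumSquares K fun i => f (b i)).Anisotropic := by
  refine fun y hy => hb y (hf ?_)
  rw [map_zero, ← hy, QuadraticMap.weightedSumSquares_apply, map_sum]
  exact Finset.sum_congr rfl fun i _ => by rw [map_mul, hσ, smul_eq_mul]; ring

end Frobenius

theorem mem_iSup_range_iff {ι A B : Type*} [Fintype ι] [AddCommGroup A] [AddCommGroup B]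
    {f : ι → A →+ B} {b : B} : b ∈ ⨆ i, (f i).range ↔ ∃ a : ι → A, ∑ i, f i (a i) = b := by
  classical
  rw [← AddMonoidHom.noncommPiCoprod_range (hcomm := fun _ _ _ _ _ => .all _ _)]
  exact exists_congr fun a => (Finset.noncommSum_eq_sum _ _).congr_left

namespace WittGroup

variable {F K : Type*} [Field F] [CharP F 2] [Field K] [CharP K 2]

/-- The symbol `[c, d]` read modulo a subgroup of the Witt group. -/
def symbolMod (I : AddSubgroup (WittGroup F)) : F →+ F →+ WittGroup F ⧸ I :=
  symbol.compr₂ (QuotientAddGroup.mk' I)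

theorem mem_of_restriction_eq_zero {f : F →+* K} {I : AddSubgroup (WittGroup F)}
    (hI : I ≤ (restriction f).ker) (hsq : ∀ z : K, z ^ 2 ∈ (balancedSubring (symbolMod I)).map f)
    {w : WittGroup F} (hw : restriction f w = 0) : w ∈ I := by
  obtain ⟨σ, hσ⟩ := exists_ringHom_apply_eq_sq f.injective hsq
  obtain ⟨n, c, d, rfl⟩ := exists_sum_symbol_eq w
  obtain ⟨m, c', b, hb, hsum⟩ := exists_linearIndependent_sum_eq σ c d
  have mk_sum {k : ℕ} (c d : Fin k → F) : ((∑ i, symbol (c i) (d i) : WittGroup F) :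
      WittGroup F ⧸ I) = ∑ i, symbolMod I (c i) (d i) := map_sum (QuotientAddGroup.mk' I) _ _
  have hw' : restriction f (∑ k, symbol (c' k) (b k)) = 0 := by
    rw [← mk_sum, ← mk_sum, QuotientAddGroup.eq] at hsum
    rw [← AddMonoidHom.mem_ker] at hw ⊢
    exact neg_mem_iff.1 ((AddSubgroup.add_mem_cancel_right _ hw).1 (hI hsum))
  simp only [map_sum, restriction_symbol] at hw'
  obtain ⟨Z, hZ, hc'⟩ := (sum_symbol_eq_zero_iff.1 hw').exists_isSymm
    (anisotropic_weightedSumSquares f.injective hσ hb)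
  rw [← QuotientAddGroup.eq_zero_iff, mk_sum, ← hsum]
  exact sum_eq_zero_of_isSymm f.injective
    (QuotientAddGroup.mk_surjective.forall.2 fun w => congrArg _ (add_self w))
    (fun c d => congrArg _ (symbol_comm c d)) (fun z d => congrArg _ (symbol_sq_mul_self z d))
    hσ hZ hc'

theorem sq_mem_balancedSubring (I : AddSubgroup (WittGroup F)) (y : F) :
    y ^ 2 ∈ balancedSubring (symbolMod I) :=
  fun c d => congrArg _ (symbol_sq_mul y c d)

theorem mem_balancedSubring_of_range_pfister_le {I : AddSubgroup (WittGroup F)} {u : Fˣ}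
    (hu : (pfister u).range ≤ I) : (u : F) ∈ balancedSubring (symbolMod I) := by
  intro c d
  have hmem : symbol c (u * d) + symbol (u * c) d ∈ I :=
    hu ⟨symbol c (u * d), pfister_symbol u c d⟩
  refine QuotientAddGroup.eq.2 (?_ : -symbol (u * c) d + symbol c (u * d) ∈ I)
  rwa [add_comm]

theorem ker_restriction [Algebra F K] {ι : Type*} {u : ι → Fˣ} {x : ι → K}
    (hx : ∀ i, x i ^ 2 = algebraMap F K (u i)) (hgen : Algebra.adjoin F (Set.range x) = ⊤) :
    (restriction (algebraMap F K)).ker = ⨆ i, (pfister (u i)).range := by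
  have hle : ⨆ i, (pfister (u i)).range ≤ (restriction (algebraMap F K)).ker := by
    refine iSup_le fun i => ?_
    rintro _ ⟨w, rfl⟩
    have hx0 : x i ≠ 0 := fun h => by
      have := hx i
      rw [h, zero_pow two_ne_zero] at this
      exact (map_ne_zero (algebraMap F K)).2 (u i).ne_zero this.symm
    have hmap : Units.map (algebraMap F K) (u i) = Units.mk0 (x i) hx0 ^ 2 :=
      Units.ext (hx i).symm
    rw [AddMonoidHom.mem_ker, restriction_pfister, hmap, pfister_sq]
  refine le_antisymm (fun w hw => mem_of_restriction_eq_zero hle ?_ hw) hle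
  refine sq_mem_map_of_adjoin_eq_top (sq_mem_balancedSubring _) ?_ hgen
  rintro _ ⟨i, rfl⟩
  have hu : (pfister (u i)).range ≤ ⨆ i, (pfister (u i)).range := le_iSup_of_le i le_rfl
  exact ⟨u i, mem_balancedSubring_of_range_pfister_le hu, (hx i).symm⟩

end WittGroup

open QF in
/-- Aravire–Laghribi, purely inseparable multiquadratic case.
Let `F` have characteristic 2 and `K = F(√a₁,…,√aₙ)` with `aᵢ ∈ F*`.  Then
`W_q(K/F) = Σᵢ ⟨1,aᵢ⟩_b ⊗ W_q(F)`: a nonsingular quadratic form `q` over `F` becomes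
hyperbolic over `K` iff `q` is Witt equivalent to `⊥ᵢ (⟨1,aᵢ⟩_b ⊗ τᵢ)` for suitable
nonsingular forms `τᵢ` over `F`. -/
theorem wittKernel_multiquadratic
    (F K : Type*) [Field F] [Field K] [Algebra F K] [CharP F 2]
    (n : ℕ) (a : Fin n → F) (ha : ∀ i, a i ≠ 0)
    (x : Fin n → K) (hx : ∀ i, x i ^ 2 = algebraMap F K (a i))
    (hgen : Algebra.adjoin F (Set.range x) = ⊤) :
    ∀ q : QF F, q.Nonsingular →
      (Hyperbolic (q.map (algebraMap F K)) ↔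
        ∃ τ : Fin n → QF F, (∀ i, (τ i).Nonsingular) ∧
          WittEquiv q (sumList (List.ofFn fun i => (τ i).orthSum (smul (a i) (τ i))))) := by
  intro q hq
  have : CharP K 2 := charP_of_injective_algebraMap (algebraMap F K).injective 2
  let u i : Fˣ := Units.mk0 (a i) (ha i)
  rw [← WittGroup.mk_eq_zero_iff_hyperbolic (hq := hq.map _), ← WittGroup.restriction_mk _ hq,
    ← AddMonoidHom.mem_ker, WittGroup.ker_restriction (u := u) hx hgen, mem_iSup_range_iff]
  constructor
  · rintro ⟨w, hw⟩
    choose τ hτ hτw using fun i => WittGroup.exists_mk_eq (w i)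
    simp only [← hτw, WittGroup.sum_pfister_mk] at hw
    exact ⟨τ, hτ, WittGroup.mk_eq_mk_iff_wittEquiv.1 hw.symm⟩
  · rintro ⟨τ, hτ, h⟩
    exact ⟨fun i => .mk (τ i) (hτ i),
      (WittGroup.sum_pfister_mk u hτ).trans (WittGroup.mk_eq_mk_iff_wittEquiv.2 h).symm⟩
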